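/- arXiv:2501.08412 — 5 statements merged into one kernel-verified Lean document; each statement's English description precedes it below -/
import Mathlib

section
/- (Solution of the ∂̄-problem; Lemma 2.1(b).) Let g : ℂ → ℂ be smooth with compact support. Then its Cauchy transform Tg is smooth on ℂ and satisfies ∂̄(Tg)(λ) = g(λ) for every λ ∈ ℂ. -/
open MeasureTheory

/-- The Wirtinger derivative `∂̄f(z) = (1/2)·(∂ₓf(z) + i·∂_yf(z))`. -/
noncomputable def dbar (f : ℂ → ℂ) (z : ℂ) : ℂ :=
  (1 / 2) * (fderiv ℝ f z 1 + Complex.I * fderiv ℝ f z Complex.I)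

/-- The Cauchy transform `(Tg)(z) = (1/π) ∫_ℂ g(μ)/(z - μ) dA(μ)` (the integrand is `0`
at `μ = z` by the division-by-zero convention). -/
noncomputable def cauchyT (g : ℂ → ℂ) (z : ℂ) : ℂ :=
  (1 / (Real.pi : ℂ)) * ∫ μ : ℂ, g μ / (z - μ)

/-!
The Cauchy transform is convolution with the locally integrable kernel `1 / (π w)`. Hence it maps
compactly supported `C^n` functions to `C^n` functions and commutes with `∂̄`, which leaves the
Cauchy–Pompeiu formula `T(∂̄g) = g`. In polar coordinates `w = r e^{iθ}` around `z` the Jacobian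
`r` cancels the pole, and `2 ∂̄g(z + w) / e^{iθ}` is the radial derivative of `g` plus `i / r` times
its angular derivative. The radial part integrates to `-2π g(z)`, and the angular part to `0` since
`g` is periodic in `θ`.
-/

section PolarIntegrals

open Complex Set
open scoped Real

variable {E F : Type*} [NormedAddCommGroup E] [NormedSpace ℝ E]
  [NormedAddCommGroup F] [NormedSpace ℝ F] {f : ℂ → F}

lemma integrableOn_polarCoord_target_clm_apply {L : ℂ → E →L[ℝ] F} (hL : Continuous L)
    (hLs : HasCompactSupport L) (z : ℂ) {v : ℝ → E} (hv : Continuous v) :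
    IntegrableOn (fun p : ℝ × ℝ ↦ L (circleMap z p.1 p.2) (v p.2)) polarCoord.target := by
  obtain ⟨R, hR⟩ := hLs.isCompact.isBounded.subset_closedBall z
  have hcont : Continuous fun p : ℝ × ℝ ↦ L (circleMap z p.1 p.2) (v p.2) := by
    unfold circleMap
    fun_prop
  have hcompact : IsCompact (Icc 0 R ×ˢ Icc (-π) π) := isCompact_Icc.prod isCompact_Icc
  refine (hcont.continuousOn.integrableOn_compact hcompact).of_forall_sdiff_eq_zero
    polarCoord.open_target.measurableSet ?_
  rintro ⟨r, θ⟩ ⟨⟨hr, hθ⟩, hout⟩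
  have hr0 : 0 < r := hr
  have houtside : circleMap z r θ ∉ tsupport L := fun hmem ↦ by
    have hrR : r ≤ R := by simpa [circleMap, abs_of_pos hr0] using hR hmem
    exact hout ⟨⟨hr0.le, hrR⟩, Ioo_subset_Icc_self hθ⟩
  simp [image_eq_zero_of_notMem_tsupport houtside]

lemma integral_Ioi_fderiv_add_smul_apply [CompleteSpace F] {f : E → F} (hf : ContDiff ℝ 1 f)
    (hfs : HasCompactSupport f) (x : E) {v : E} (hv : v ≠ 0) :
    ∫ r in Ioi (0 : ℝ), fderiv ℝ f (x + r • v) v = -f x := by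
  have hderiv (r : ℝ) : deriv (fun r : ℝ ↦ f (x + r • v)) r = fderiv ℝ f (x + r • v) v := by
    have hline : HasDerivAt (fun r : ℝ ↦ x + r • v) v r := by
      simpa using ((hasDerivAt_id r).smul_const v).const_add x
    exact ((hf.differentiable one_ne_zero _).hasFDerivAt.comp_hasDerivAt r hline).deriv
  have hsupp : HasCompactSupport fun r : ℝ ↦ f (x + r • v) :=
    hfs.comp_isClosedEmbedding
      ((Homeomorph.addLeft x).isClosedEmbedding.comp (isClosedEmbedding_smul_left hv))
  simpa [hderiv] using hsupp.integral_Ioi_deriv_eq (by fun_prop) 0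

lemma intervalIntegral_fderiv_circleMap_apply_eq_zero [CompleteSpace F]
    (hf : ContDiff ℝ 1 f) (z : ℂ) (r a : ℝ) :
    ∫ θ in a..a + 2 * π, fderiv ℝ f (circleMap z r θ) (circleMap 0 r θ * I) = 0 := by
  have hderiv (θ : ℝ) : HasDerivAt (fun θ ↦ f (circleMap z r θ))
      (fderiv ℝ f (circleMap z r θ) (circleMap 0 r θ * I)) θ :=
    (hf.differentiable one_ne_zero _).hasFDerivAt.comp_hasDerivAt θ (hasDerivAt_circleMap z r θ)
  have hcont : Continuous fun θ ↦ fderiv ℝ f (circleMap z r θ) (circleMap 0 r θ * I) :=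
    ((hf.continuous_fderiv one_ne_zero).comp (continuous_circleMap z r)).clm_apply (by fun_prop)
  rw [intervalIntegral.integral_eq_sub_of_hasDerivAt (fun θ _ ↦ hderiv θ)
    (hcont.intervalIntegrable _ _), periodic_circleMap z r a, sub_self]

lemma integral_polarCoord_target_fderiv_radial [CompleteSpace F] (hf : ContDiff ℝ 1 f)
    (hfs : HasCompactSupport f) (z : ℂ) :
    ∫ p in polarCoord.target, fderiv ℝ f (circleMap z p.1 p.2) (exp (p.2 * I)) =
      -((2 * π) • f z) := by
  have hint : Integrable (fun p : ℝ × ℝ ↦ fderiv ℝ f (circleMap z p.1 p.2) (exp (p.2 * I)))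
      ((volume.restrict (Ioi 0)).prod (volume.restrict (Ioo (-π) π))) := by
    rw [Measure.prod_restrict]
    exact integrableOn_polarCoord_target_clm_apply (v := fun θ : ℝ ↦ exp (θ * I))
      (hf.continuous_fderiv one_ne_zero) (hfs.fderiv ℝ) z (by fun_prop)
  have hradial (θ : ℝ) :
      ∫ r in Ioi (0 : ℝ), fderiv ℝ f (circleMap z r θ) (exp (θ * I)) = -f z :=
    integral_Ioi_fderiv_add_smul_apply hf hfs z (exp_ne_zero _)
  change ∫ p in Ioi 0 ×ˢ Ioo (-π) π, _ ∂(volume.prod volume) = _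
  rw [← Measure.prod_restrict, integral_prod_symm _ hint]
  simp [hradial, ← two_mul, Real.pi_pos.le]

lemma integral_polarCoord_target_fderiv_angular [CompleteSpace F] (hf : ContDiff ℝ 1 f)
    (hfs : HasCompactSupport f) (z : ℂ) :
    ∫ p in polarCoord.target, fderiv ℝ f (circleMap z p.1 p.2) (I * exp (p.2 * I)) = 0 := by
  have hint := integrableOn_polarCoord_target_clm_apply (v := fun θ : ℝ ↦ I * exp (θ * I))
    (hf.continuous_fderiv one_ne_zero) (hfs.fderiv ℝ) z (by fun_prop)
  have hangular (r : ℝ) (hr : r ∈ Ioi 0) :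
      ∫ θ in Ioo (-π) π, fderiv ℝ f (circleMap z r θ) (I * exp (θ * I)) = 0 := by
    have hscale (θ : ℝ) : fderiv ℝ f (circleMap z r θ) (circleMap 0 r θ * I) =
        r • fderiv ℝ f (circleMap z r θ) (I * exp (θ * I)) := by
      rw [← map_smul, real_smul, circleMap_zero, mul_assoc, mul_comm I]
    have hperiod := intervalIntegral_fderiv_circleMap_apply_eq_zero hf z r (-π)
    rw [show -π + 2 * π = π by ring] at hperiod
    simp only [hscale, intervalIntegral.integral_smul] at hperiod
    rw [← integral_Ioc_eq_integral_Ioo,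
      ← intervalIntegral.integral_of_le (by linarith [Real.pi_pos])]
    exact (smul_eq_zero.mp hperiod).resolve_left (ne_of_gt hr)
  change ∫ p in Ioi 0 ×ˢ Ioo (-π) π, _ ∂(volume.prod volume) = _
  rw [setIntegral_prod _ hint, setIntegral_congr_fun measurableSet_Ioi hangular, integral_zero]

end PolarIntegrals

section CauchyPompeiu

open Complex
open scoped Real ComplexConjugate

variable {g : ℂ → ℂ}

lemma conj_mul_dbar (f : ℂ → ℂ) (z w : ℂ) :
    conj w * dbar f z = (1 / 2) * (fderiv ℝ f z w + I * fderiv ℝ f z (I * w)) := by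
  have hcoord (v : ℂ) : fderiv ℝ f z v = v.re * fderiv ℝ f z 1 + v.im * fderiv ℝ f z I := by
    simp only [← real_smul, ← map_smul, ← map_add]
    simp [re_add_im]
  have hconj : conj w = w.re - w.im * I := by apply Complex.ext <;> simp
  rw [hcoord w, hcoord (I * w), dbar, hconj]
  simp only [I_mul_re, I_mul_im, ofReal_neg]
  linear_combination (-(w.im / 2) * fderiv ℝ f z I) * I_sq

lemma smul_dbar_circleMap_div (f : ℂ → ℂ) (z : ℂ) {r : ℝ} (hr : r ≠ 0) (θ : ℝ) :
    r • (dbar f (circleMap z r θ) / (z - circleMap z r θ)) =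
      -(1 / 2) * (fderiv ℝ f (circleMap z r θ) (exp (θ * I)) +
        I * fderiv ℝ f (circleMap z r θ) (I * exp (θ * I))) := by
  have hrC : (r : ℂ) ≠ 0 := ofReal_ne_zero.mpr hr
  have hinv : (exp (θ * I))⁻¹ = conj (exp (θ * I)) := by
    rw [← exp_conj, ← exp_neg]
    simp
  calc r • (dbar f (circleMap z r θ) / (z - circleMap z r θ))
      = -((exp (θ * I))⁻¹ * dbar f (circleMap z r θ)) := by
        rw [← neg_sub, circleMap_sub_center, circleMap_zero, real_smul]
        field_simp
    _ = _ := by rw [hinv, conj_mul_dbar, neg_mul]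

lemma integral_dbar_div_sub (hg : ContDiff ℝ 1 g) (hgs : HasCompactSupport g) (z : ℂ) :
    ∫ μ, dbar g μ / (z - μ) = π * g z := by
  have hfderiv : Continuous (fderiv ℝ g) := hg.continuous_fderiv one_ne_zero
  have hradial := integrableOn_polarCoord_target_clm_apply (v := fun θ : ℝ ↦ exp (θ * I))
    hfderiv (hgs.fderiv ℝ) z (by fun_prop)
  have hangular := integrableOn_polarCoord_target_clm_apply (v := fun θ : ℝ ↦ I * exp (θ * I))
    hfderiv (hgs.fderiv ℝ) z (by fun_prop)
  have hpolar (p : ℝ × ℝ) : z + Complex.polarCoord.symm p = circleMap z p.1 p.2 := by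
    rw [Complex.polarCoord_symm_apply, circleMap, exp_mul_I, ofReal_cos, ofReal_sin]
  calc ∫ μ, dbar g μ / (z - μ)
      = ∫ p in polarCoord.target,
          p.1 • (dbar g (circleMap z p.1 p.2) / (z - circleMap z p.1 p.2)) := by
        rw [← integral_add_left_eq_self _ z, ← Complex.integral_comp_polarCoord_symm]
        simp only [hpolar]
    _ = ∫ p in polarCoord.target,
          -(1 / 2) * (fderiv ℝ g (circleMap z p.1 p.2) (exp (p.2 * I)) +
            I * fderiv ℝ g (circleMap z p.1 p.2) (I * exp (p.2 * I))) :=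
        setIntegral_congr_fun polarCoord.open_target.measurableSet
          fun p hp ↦ smul_dbar_circleMap_div g z (ne_of_gt hp.1) p.2
    _ = π * g z := by
        rw [integral_const_mul, integral_add hradial (hangular.const_mul I), integral_const_mul,
          integral_polarCoord_target_fderiv_radial hg hgs,
          integral_polarCoord_target_fderiv_angular hg hgs, real_smul]
        push_cast
        ring

lemma cauchyT_dbar (hg : ContDiff ℝ 1 g) (hgs : HasCompactSupport g) :
    cauchyT (dbar g) = g := by
  ext z
  have hpi : (π : ℂ) ≠ 0 := ofReal_ne_zero.mpr Real.pi_ne_zero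
  rw [cauchyT, integral_dbar_div_sub hg hgs]
  field_simp

end CauchyPompeiu

section Regularity

open scoped Convolution

variable {g : ℂ → ℂ}

lemma locallyIntegrable_inv_complex : LocallyIntegrable (fun w : ℂ ↦ w⁻¹) :=
  locallyIntegrable_of_norm_le_rpow (C := 1) (α := 1) (by simp) (by simp)
    (.of_forall fun w ↦ by simp [Real.rpow_neg_one]) measurable_inv.aestronglyMeasurable

lemma cauchyT_eq_convolution (g : ℂ → ℂ) :
    cauchyT g = fun z ↦ (1 / (Real.pi : ℂ)) *
      ((fun w : ℂ ↦ w⁻¹) ⋆[ContinuousLinearMap.mul ℝ ℂ, volume] g) z := by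
  ext z
  simp only [cauchyT, convolution_eq_swap, ContinuousLinearMap.mul_apply', div_eq_inv_mul]

lemma integrable_div_sub (hg : Continuous g) (hgs : HasCompactSupport g) (z : ℂ) :
    Integrable fun μ ↦ g μ / (z - μ) := by
  simpa only [ContinuousLinearMap.mul_apply', div_eq_inv_mul] using
    (hgs.convolutionExists_right (ContinuousLinearMap.mul ℝ ℂ)
      locallyIntegrable_inv_complex hg z).integrable_swap

lemma contDiff_cauchyT {n : ℕ∞} (hg : ContDiff ℝ n g) (hgs : HasCompactSupport g) :
    ContDiff ℝ n (cauchyT g) := by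
  rw [cauchyT_eq_convolution]
  exact contDiff_const.mul (hgs.contDiff_convolution_right _ locallyIntegrable_inv_complex hg)

lemma fderiv_cauchyT_apply (hg : ContDiff ℝ 1 g) (hgs : HasCompactSupport g) (z v : ℂ) :
    fderiv ℝ (cauchyT g) z v = cauchyT (fun μ ↦ fderiv ℝ g μ v) z := by
  have hderiv := (hgs.hasFDerivAt_convolution_right (ContinuousLinearMap.mul ℝ ℂ)
    locallyIntegrable_inv_complex hg z).const_mul (1 / (Real.pi : ℂ))
  rw [cauchyT_eq_convolution, cauchyT_eq_convolution, hderiv.fderiv, smul_apply, smul_eq_mul,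
    convolution_precompR_apply _ locallyIntegrable_inv_complex (hgs.fderiv ℝ)
      (hg.continuous_fderiv one_ne_zero)]

lemma dbar_cauchyT (hg : ContDiff ℝ 1 g) (hgs : HasCompactSupport g) :
    dbar (cauchyT g) = cauchyT (dbar g) := by
  ext z
  have hint (v : ℂ) : Integrable fun μ ↦ fderiv ℝ g μ v / (z - μ) :=
    integrable_div_sub ((hg.continuous_fderiv one_ne_zero).clm_apply continuous_const)
      (hgs.fderiv_apply ℝ v) z
  have hsplit : ∫ μ, dbar g μ / (z - μ) = (1 / 2) * ((∫ μ, fderiv ℝ g μ 1 / (z - μ)) +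
      Complex.I * ∫ μ, fderiv ℝ g μ Complex.I / (z - μ)) := by
    rw [← integral_const_mul, ← integral_add (hint 1) ((hint _).const_mul _),
      ← integral_const_mul]
    refine integral_congr_ae (.of_forall fun μ ↦ ?_)
    simp only [dbar]
    ring
  rw [dbar, fderiv_cauchyT_apply hg hgs, fderiv_cauchyT_apply hg hgs]
  simp only [cauchyT, hsplit]
  ring

end Regularity

theorem cauchyT_solves_dbar_problem_general {n : ℕ∞} (hn : 1 ≤ n) {g : ℂ → ℂ}
    (hg : ContDiff ℝ n g) (hgs : HasCompactSupport g) :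
    ContDiff ℝ n (cauchyT g) ∧ ∀ z : ℂ, dbar (cauchyT g) z = g z := by
  have hg₁ : ContDiff ℝ 1 g := hg.of_le (by exact_mod_cast hn)
  refine ⟨contDiff_cauchyT hg hgs, fun z ↦ ?_⟩
  rw [dbar_cauchyT hg₁ hgs, cauchyT_dbar hg₁ hgs]

/-- Lemma 2.1(b): for smooth compactly supported `g`, the Cauchy transform `Tg` is smooth
and solves the `∂̄`-problem `∂̄(Tg) = g` on all of `ℂ`. -/
theorem cauchyT_solves_dbar_problem (g : ℂ → ℂ) (hg : ContDiff ℝ (⊤ : ℕ∞) g)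
    (hgs : HasCompactSupport g) :
    ContDiff ℝ (⊤ : ℕ∞) (cauchyT g) ∧ ∀ z : ℂ, dbar (cauchyT g) z = g z :=
  cauchyT_solves_dbar_problem_general le_top hg hgs
end

section
/- (Lemma 2.2(i), concrete form.) Let g : ℂ → ℂ be smooth with compact support. Then the Cauchy transform Tg is complex-differentiable at every point of the complement of tsupport g (hence holomorphic there), and Tg(λ) → 0 as |λ| → ∞, i.e. Tg tends to 0 along the cobounded filter on ℂ. -/
open MeasureTheory

/-!
Away from the support of the density, the kernel `(z - w)⁻¹` and its derivative `-(z - w)⁻²` are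
bounded uniformly in `w` and locally uniformly in `z`, so one may differentiate under the integral
sign. If the support lies in the ball of radius `R` about `0`, the kernel is at most `(‖z‖ - R)⁻¹`
there, so the transform is `O(‖z‖⁻¹)` at infinity.
-/

open Filter Function Metric Topology Bornology

theorem exists_pos_le_dist_of_notMem_tsupport {X E : Type*} [PseudoMetricSpace X] [Zero E]
    {f : X → E} {z : X} (hz : z ∉ tsupport f) :
    ∃ δ > 0, ∀ x ∈ ball z δ, ∀ w ∈ support f, δ ≤ dist x w := by
  obtain ⟨r, hr, hball⟩ := isOpen_iff.1 (isClosed_tsupport f).isOpen_compl z hz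
  refine ⟨r / 2, half_pos hr, fun x hx w hw => ?_⟩
  have hzw : r ≤ dist w z := not_lt.1 fun h => hball h (subset_tsupport f hw)
  have htriangle : dist w z ≤ dist x w + dist x z := dist_triangle_left w z x
  linarith [mem_ball.1 hx]

theorem hasDerivAt_inv_sub_smul {𝕜 E : Type*} [NontriviallyNormedField 𝕜]
    [NormedAddCommGroup E] [NormedSpace 𝕜 E] {z w : 𝕜} (hzw : z ≠ w) (c : E) :
    HasDerivAt (fun x => (x - w)⁻¹ • c) (-((z - w)⁻¹ ^ 2 • c)) z := by
  have hinv : HasDerivAt (fun x => (x - w)⁻¹) (-(z - w)⁻¹ ^ 2) z := by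
    simpa only [inv_pow] using (hasDerivAt_inv (sub_ne_zero.2 hzw)).comp_sub_const z w
  simpa only [neg_smul] using hinv.smul_const c

theorem norm_inv_sub_pow_smul_le {𝕜 E : Type*} [NormedField 𝕜] [SeminormedAddCommGroup E]
    [NormedSpace 𝕜 E] {f : 𝕜 → E} {z : 𝕜} {δ : ℝ} (hδ : 0 < δ)
    (hsep : ∀ w ∈ support f, δ ≤ dist z w) (n : ℕ) (w : 𝕜) :
    ‖(z - w)⁻¹ ^ n • f w‖ ≤ δ⁻¹ ^ n * ‖f w‖ := by
  by_cases hw : f w = 0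
  · simp [hw]
  · have hzw : δ ≤ ‖z - w‖ := dist_eq_norm z w ▸ hsep w hw
    rw [norm_smul, norm_pow, norm_inv]
    gcongr

section CauchyKernel

variable {𝕜 E : Type*} [RCLike 𝕜] [NormedAddCommGroup E] [NormedSpace 𝕜 E]
  {ν : Measure 𝕜} {f : 𝕜 → E} {z : 𝕜} {δ : ℝ}

theorem aestronglyMeasurable_inv_sub_pow_smul (hf : AEStronglyMeasurable f ν) (z : 𝕜) (n : ℕ) :
    AEStronglyMeasurable (fun w => (z - w)⁻¹ ^ n • f w) ν :=
  ((measurable_id.const_sub z).inv.pow_const n).aestronglyMeasurable.smul hf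

theorem integrable_inv_sub_pow_smul (hf : Integrable f ν) (hδ : 0 < δ)
    (hsep : ∀ w ∈ support f, δ ≤ dist z w) (n : ℕ) :
    Integrable (fun w => (z - w)⁻¹ ^ n • f w) ν :=
  (hf.norm.const_mul (δ⁻¹ ^ n)).mono'
    (aestronglyMeasurable_inv_sub_pow_smul hf.aestronglyMeasurable z n)
    (ae_of_all ν (norm_inv_sub_pow_smul_le hδ hsep n))

variable [NormedSpace ℝ E]

theorem hasDerivAt_integral_inv_sub_smul (hf : Integrable f ν) (hz : z ∉ tsupport f) :
    HasDerivAt (fun x => ∫ w, (x - w)⁻¹ • f w ∂ν) (-∫ w, (z - w)⁻¹ ^ 2 • f w ∂ν) z := by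
  obtain ⟨δ, hδ, hsep⟩ := exists_pos_le_dist_of_notMem_tsupport hz
  have hmeas (x : 𝕜) : AEStronglyMeasurable (fun w => (x - w)⁻¹ • f w) ν := by
    simpa only [pow_one] using aestronglyMeasurable_inv_sub_pow_smul hf.aestronglyMeasurable x 1
  have hint : Integrable (fun w => (z - w)⁻¹ • f w) ν := by
    simpa only [pow_one] using integrable_inv_sub_pow_smul hf hδ (hsep z (mem_ball_self hδ)) 1
  have hderiv (w x : 𝕜) (hx : x ∈ ball z δ) :
      HasDerivAt (fun y => (y - w)⁻¹ • f w) (-((x - w)⁻¹ ^ 2 • f w)) x := by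
    by_cases hw : f w = 0
    · simpa [hw] using hasDerivAt_const x (0 : E)
    · exact hasDerivAt_inv_sub_smul (dist_pos.1 (hδ.trans_le (hsep x hx w hw))) (f w)
  have hbound (w x : 𝕜) (hx : x ∈ ball z δ) :
      ‖-((x - w)⁻¹ ^ 2 • f w)‖ ≤ δ⁻¹ ^ 2 * ‖f w‖ :=
    (norm_neg _).trans_le (norm_inv_sub_pow_smul_le hδ (hsep x hx) 2 w)
  rw [← integral_neg]
  exact (hasDerivAt_integral_of_dominated_loc_of_deriv_le (ball_mem_nhds z hδ)
    (.of_forall hmeas) hint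
    (aestronglyMeasurable_inv_sub_pow_smul hf.aestronglyMeasurable z 2).neg
    (ae_of_all ν hbound) (hf.norm.const_mul _) (ae_of_all ν hderiv)).2

theorem norm_integral_inv_sub_smul_le (hf : Integrable f ν) (hδ : 0 < δ)
    (hsep : ∀ w ∈ support f, δ ≤ dist z w) :
    ‖∫ w, (z - w)⁻¹ • f w ∂ν‖ ≤ δ⁻¹ * ∫ w, ‖f w‖ ∂ν := by
  rw [← integral_const_mul]
  refine norm_integral_le_of_norm_le (hf.norm.const_mul _) (ae_of_all ν fun w => ?_)
  simpa only [pow_one] using norm_inv_sub_pow_smul_le hδ hsep 1 w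

theorem tendsto_integral_inv_sub_smul_cobounded (hf : Integrable f ν)
    (hbdd : IsBounded (support f)) :
    Tendsto (fun z => ∫ w, (z - w)⁻¹ • f w ∂ν) (cobounded 𝕜) (𝓝 0) := by
  obtain ⟨R, hR⟩ := hbdd.exists_norm_le
  have hgap : Tendsto (fun z : 𝕜 => ‖z‖ - R) (cobounded 𝕜) atTop :=
    tendsto_atTop_add_const_right _ (-R) tendsto_norm_cobounded_atTop
  have hlim : Tendsto (fun z : 𝕜 => (‖z‖ - R)⁻¹ * ∫ w, ‖f w‖ ∂ν) (cobounded 𝕜) (𝓝 0) := by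
    simpa only [zero_mul, comp_apply] using (tendsto_inv_atTop_zero.comp hgap).mul_const _
  refine squeeze_zero_norm' ?_ hlim
  filter_upwards [hgap.eventually_gt_atTop 0] with z hz
  refine norm_integral_inv_sub_smul_le hf hz fun w hw => ?_
  calc ‖z‖ - R ≤ ‖z‖ - ‖w‖ := sub_le_sub_left (hR w hw) _
    _ ≤ dist z w := dist_eq_norm z w ▸ norm_sub_norm_le z w

end CauchyKernel

theorem cauchyT_eq_mul_integral_inv_sub_smul (g : ℂ → ℂ) :
    cauchyT g = fun z => (1 / (Real.pi : ℂ)) * ∫ w, (z - w)⁻¹ • g w := by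
  funext z
  simp only [cauchyT, smul_eq_mul, div_eq_inv_mul]

theorem cauchyT_holomorphic_off_support_and_decay_general (g : ℂ → ℂ) (hg : Integrable g)
    (hgs : HasCompactSupport g) :
    (∀ z ∉ tsupport g, DifferentiableAt ℂ (cauchyT g) z) ∧
      Tendsto (cauchyT g) (cobounded ℂ) (𝓝 0) := by
  have hbdd : IsBounded (support g) := hgs.isCompact.isBounded.subset (subset_tsupport g)
  rw [cauchyT_eq_mul_integral_inv_sub_smul]
  constructor
  · intro z hz
    exact ((hasDerivAt_integral_inv_sub_smul hg hz).const_mul _).differentiableAt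
  · simpa only [mul_zero] using (tendsto_integral_inv_sub_smul_cobounded hg hbdd).const_mul _

/-- Lemma 2.2(i): for smooth compactly supported `g`, the Cauchy transform `Tg` is
complex-differentiable at every point outside `tsupport g` (hence holomorphic there),
and `Tg(λ) → 0` as `|λ| → ∞`. -/
theorem cauchyT_holomorphic_off_support_and_decay (g : ℂ → ℂ) (hg : ContDiff ℝ (⊤ : ℕ∞) g)
    (hgs : HasCompactSupport g) :
    (∀ z ∉ tsupport g, DifferentiableAt ℂ (cauchyT g) z) ∧
      Filter.Tendsto (cauchyT g) (Bornology.cobounded ℂ) (nhds 0) :=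
  cauchyT_holomorphic_off_support_and_decay_general g
    (hg.continuous.integrable_of_hasCompactSupport hgs) hgs
end

section
/- (Cauchy transform inverts ∂̄ on compactly supported functions; 'if' direction of Lemma 2.2(ii).) Let h : ℂ → ℂ be smooth with compact support. Then T(∂̄h) = h, i.e. for every λ ∈ ℂ, (1/π) ∫_ℂ (∂̄h)(μ)/(λ − μ) dA(μ) = h(λ). -/
open MeasureTheory

/-!
In polar coordinates `w = z + r u`, `u = exp (iθ)`, the Jacobian `r` cancels the singularity of
`1 / (z - w)`, and rotating the frame `(1, i)` to `(u, iu)` turns `2 r ∂̄h(w) / (z - w)` into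
`-∂_u h - i ∂_{iu} h`. Here `∂_u h` is an `r`-derivative, so the first term integrates
to `h z` along each ray; `∂_{iu} h` is `1 / r` times a `θ`-derivative, so the second integrates to
zero over each circle.
-/

open Set Complex ComplexConjugate Real

section

variable {E : Type*} [AddCommGroup E] [Module ℂ E]

theorem linearMap_apply_add_I_smul_apply_mul_I (L : ℂ →ₗ[ℝ] E) (u : ℂ) :
    L u + I • L (u * I) = conj u • (L 1 + I • L I) := by
  have apply_eq (v : ℂ) : L v = (v.re : ℂ) • L 1 + (v.im : ℂ) • L I := by
    conv_lhs => rw [← v.re_add_im, ← mul_one (v.re : ℂ), ← real_smul, ← real_smul, map_add,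
      map_smul, map_smul, ← coe_smul, ← coe_smul]
  have conj_eq : conj u = u.re - u.im * I := by simp [Complex.ext_iff]
  rw [apply_eq u, apply_eq (u * I), conj_eq]
  simp only [mul_I_re, mul_I_im, ofReal_neg]
  linear_combination (norm := module) (u.im : ℂ) • I_mul_I • L I

theorem radius_mul_inv_sub_circleMap (c : ℂ) {r : ℝ} (hr : r ≠ 0) (θ : ℝ) :
    r * (c - circleMap c r θ)⁻¹ = -conj (circleMap 0 1 θ) := by
  rw [← neg_sub, circleMap_sub_center, inv_neg, circleMap_zero_inv, conj_circleMap_zero]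
  simp [circleMap, hr]

theorem radius_smul_inv_sub_circleMap_smul (L : ℂ →ₗ[ℝ] E) (c : ℂ) {r : ℝ} (hr : r ≠ 0) (θ : ℝ) :
    r • (c - circleMap c r θ)⁻¹ • (L 1 + I • L I) =
      -(L (circleMap 0 1 θ) + I • L (circleMap 0 1 θ * I)) := by
  rw [← coe_smul, smul_smul, radius_mul_inv_sub_circleMap c hr, neg_smul,
    linearMap_apply_add_I_smul_apply_mul_I]

end

section

variable {V E : Type*} [NormedAddCommGroup V] [NormedSpace ℝ V]
  [NormedAddCommGroup E] [NormedSpace ℝ E]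

theorem hasCompactSupport_comp_add_smul {α : Type*} [Zero α] {f : V → α}
    (hf : HasCompactSupport f) (x : V) {v : V} (hv : v ≠ 0) :
    HasCompactSupport fun r : ℝ ↦ f (x + r • v) :=
  hf.comp_isClosedEmbedding
    ((Homeomorph.addLeft x).isClosedEmbedding.comp (isClosedEmbedding_smul_left hv))

theorem integral_Ioi_fderiv_add_smul [CompleteSpace E] {f : V → E} (hf : ContDiff ℝ 1 f)
    (hfs : HasCompactSupport f) (x : V) {v : V} (hv : v ≠ 0) :
    ∫ r in Ioi (0 : ℝ), fderiv ℝ f (x + r • v) v = -f x := by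
  have deriv_eq (r : ℝ) : deriv (fun s : ℝ ↦ f (x + s • v)) r = fderiv ℝ f (x + r • v) v := by
    have line : HasDerivAt (fun s : ℝ ↦ x + s • v) v r := by
      simpa using ((hasDerivAt_id r).smul_const v).const_add x
    exact ((hf.differentiable one_ne_zero _).hasFDerivAt.comp_hasDerivAt r line).deriv
  have ray_contDiff : ContDiff ℝ 1 fun r : ℝ ↦ f (x + r • v) := hf.comp (by fun_prop)
  simp_rw [← deriv_eq]
  simpa using (hasCompactSupport_comp_add_smul hfs x hv).integral_Ioi_deriv_eq ray_contDiff 0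

theorem circleMap_eq_add_smul (c : ℂ) (r θ : ℝ) :
    circleMap c r θ = c + r • circleMap 0 1 θ := by
  simp [circleMap]

theorem integral_fderiv_circleMap_tangent [CompleteSpace E] {f : ℂ → E} (hf : ContDiff ℝ 1 f)
    (c : ℂ) (r a : ℝ) :
    ∫ θ in a..a + 2 * π, fderiv ℝ f (circleMap c r θ) (circleMap 0 r θ * I) = 0 := by
  have hasDerivAt_comp (θ : ℝ) : HasDerivAt (f ∘ circleMap c r)
      (fderiv ℝ f (circleMap c r θ) (circleMap 0 r θ * I)) θ :=
    (hf.differentiable one_ne_zero _).hasFDerivAt.comp_hasDerivAt θ (hasDerivAt_circleMap c r θ)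
  have continuous_deriv :
      Continuous fun θ ↦ fderiv ℝ f (circleMap c r θ) (circleMap 0 r θ * I) := by
    have := hf.continuous_fderiv one_ne_zero
    fun_prop
  rw [intervalIntegral.integral_eq_sub_of_hasDerivAt (fun θ _ ↦ hasDerivAt_comp θ)
    (continuous_deriv.intervalIntegrable a (a + 2 * π)), Function.comp_apply, Function.comp_apply,
    periodic_circleMap, sub_self]

theorem integral_fderiv_circleMap_unit_tangent [CompleteSpace E] {f : ℂ → E}
    (hf : ContDiff ℝ 1 f) (c : ℂ) {r : ℝ} (hr : r ≠ 0) (a : ℝ) :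
    ∫ θ in a..a + 2 * π, fderiv ℝ f (circleMap c r θ) (circleMap 0 1 θ * I) = 0 := by
  have tangent_eq (θ : ℝ) : circleMap 0 r θ * I = r • (circleMap 0 1 θ * I) := by
    rw [circleMap_eq_add_smul, zero_add, smul_mul_assoc]
  have scaled := integral_fderiv_circleMap_tangent hf c r a
  simp only [tangent_eq, map_smul, intervalIntegral.integral_smul] at scaled
  exact (smul_eq_zero.mp scaled).resolve_left hr

theorem integral_eq_setIntegral_circleMap (f : ℂ → E) (c : ℂ) :
    ∫ w, f w = ∫ p in Ioi (0 : ℝ) ×ˢ Ioo (-π) π, p.1 • f (circleMap c p.1 p.2) := by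
  rw [← integral_add_left_eq_self f c, ← Complex.integral_comp_polarCoord_symm,
    polarCoord_target]
  simp [circleMap, exp_mul_I]

theorem exists_forall_gt_comp_circleMap_eq_zero {α : Type*} [Zero α] {f : ℂ → α}
    (hf : HasCompactSupport f) (c : ℂ) :
    ∃ R : ℝ, ∀ r > R, ∀ θ, f (circleMap c r θ) = 0 := by
  obtain ⟨R, hR⟩ := hf.isCompact.isBounded.subset_ball c
  exact ⟨R, fun r hr θ ↦ image_eq_zero_of_notMem_tsupport fun hmem ↦
    circleMap_notMem_ball c r θ (Metric.ball_subset_ball hr.le (hR hmem))⟩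

theorem integrableOn_clm_apply_circleMap {Φ : ℂ → V →L[ℝ] E} (hΦ : Continuous Φ)
    (hΦs : HasCompactSupport Φ) (c : ℂ) {v : ℝ → V} (hv : Continuous v) (a b d : ℝ) :
    IntegrableOn (fun p : ℝ × ℝ ↦ Φ (circleMap c p.1 p.2) (v p.2)) (Ioi a ×ˢ Ioo b d) := by
  obtain ⟨R, hR⟩ := exists_forall_gt_comp_circleMap_eq_zero hΦs c
  have continuous_integrand : Continuous fun p : ℝ × ℝ ↦ Φ (circleMap c p.1 p.2) (v p.2) := by
    fun_prop
  have integrableOn_Icc := continuous_integrand.continuousOn.integrableOn_compact (μ := volume)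
    (isCompact_Icc.prod isCompact_Icc : IsCompact (Icc a R ×ˢ Icc b d))
  refine integrableOn_Icc.of_forall_sdiff_eq_zero (measurableSet_Ioi.prod measurableSet_Ioo) ?_
  rintro ⟨r, θ⟩ ⟨⟨har, hθ⟩, hnot⟩
  have hRr : R < r := not_le.mp fun hrR ↦ hnot ⟨⟨le_of_lt har, hrR⟩, Ioo_subset_Icc_self hθ⟩
  simp [hR r hRr]

variable [CompleteSpace E] {f : ℂ → E}

theorem setIntegral_fderiv_circleMap_unit_normal (hf : ContDiff ℝ 1 f) (hfs : HasCompactSupport f)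
    (c : ℂ) :
    ∫ p in Ioi (0 : ℝ) ×ˢ Ioo (-π) π, fderiv ℝ f (circleMap c p.1 p.2) (circleMap 0 1 p.2) =
      -((2 * π) • f c) := by
  have integrable := integrableOn_clm_apply_circleMap (hf.continuous_fderiv one_ne_zero)
    (hfs.fderiv ℝ) c (continuous_circleMap 0 1) 0 (-π) π
  have ray (θ : ℝ) : ∫ r in Ioi (0 : ℝ), fderiv ℝ f (circleMap c r θ) (circleMap 0 1 θ) = -f c := by
    simp_rw [circleMap_eq_add_smul c]
    exact integral_Ioi_fderiv_add_smul hf hfs c (circleMap_ne_center one_ne_zero)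
  rw [IntegrableOn, Measure.volume_eq_prod, ← Measure.prod_restrict] at integrable
  rw [Measure.volume_eq_prod, ← Measure.prod_restrict, integral_prod_symm _ integrable]
  simp only [ray, setIntegral_const, smul_neg]
  rw [volume_real_Ioo_of_le (by linarith [pi_pos]), sub_neg_eq_add, two_mul]

theorem setIntegral_fderiv_circleMap_unit_tangent (hf : ContDiff ℝ 1 f) (hfs : HasCompactSupport f)
    (c : ℂ) :
    ∫ p in Ioi (0 : ℝ) ×ˢ Ioo (-π) π,
      fderiv ℝ f (circleMap c p.1 p.2) (circleMap 0 1 p.2 * I) = 0 := by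
  have integrable := integrableOn_clm_apply_circleMap (hf.continuous_fderiv one_ne_zero)
    (hfs.fderiv ℝ) c (v := fun θ ↦ circleMap 0 1 θ * I) (by fun_prop) 0 (-π) π
  rw [Measure.volume_eq_prod, setIntegral_prod _ integrable]
  refine setIntegral_eq_zero_of_forall_eq_zero fun r hr ↦ ?_
  rw [← integral_Ioc_eq_integral_Ioo, ← intervalIntegral.integral_of_le (by linarith [pi_pos])]
  convert integral_fderiv_circleMap_unit_tangent hf c (ne_of_gt hr) (-π) using 2
  ring

end

theorem integral_inv_sub_smul_fderiv_add_I_smul_fderiv {E : Type*} [NormedAddCommGroup E]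
    [NormedSpace ℂ E] [CompleteSpace E] {f : ℂ → E} (hf : ContDiff ℝ 1 f)
    (hfs : HasCompactSupport f) (z : ℂ) :
    ∫ w, (z - w)⁻¹ • (fderiv ℝ f w 1 + I • fderiv ℝ f w I) = (2 * π) • f z := by
  have continuous_fderiv := hf.continuous_fderiv one_ne_zero
  have normal_integrable := integrableOn_clm_apply_circleMap continuous_fderiv (hfs.fderiv ℝ) z
    (continuous_circleMap 0 1) 0 (-π) π
  have tangent_integrable := integrableOn_clm_apply_circleMap continuous_fderiv (hfs.fderiv ℝ) z
    (v := fun θ ↦ circleMap 0 1 θ * I) (by fun_prop) 0 (-π) π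
  have polar_integrand : ∀ p ∈ Ioi (0 : ℝ) ×ˢ Ioo (-π) π,
      p.1 • (z - circleMap z p.1 p.2)⁻¹ • (fderiv ℝ f (circleMap z p.1 p.2) 1 +
        I • fderiv ℝ f (circleMap z p.1 p.2) I) =
      -(fderiv ℝ f (circleMap z p.1 p.2) (circleMap 0 1 p.2) +
        I • fderiv ℝ f (circleMap z p.1 p.2) (circleMap 0 1 p.2 * I)) :=
    fun p hp ↦ radius_smul_inv_sub_circleMap_smul (fderiv ℝ f (circleMap z p.1 p.2)).toLinearMap
      z (ne_of_gt hp.1) p.2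
  rw [integral_eq_setIntegral_circleMap _ z,
    setIntegral_congr_fun (measurableSet_Ioi.prod measurableSet_Ioo) polar_integrand,
    integral_neg, integral_add normal_integrable (tangent_integrable.fun_smul I), integral_smul,
    setIntegral_fderiv_circleMap_unit_normal hf hfs,
    setIntegral_fderiv_circleMap_unit_tangent hf hfs, smul_zero, add_zero, neg_neg]

theorem cauchyT_dbar_eq_self_general {h : ℂ → ℂ} (hh : ContDiff ℝ 1 h)
    (hhs : HasCompactSupport h) (z : ℂ) : cauchyT (dbar h) z = h z := by
  have integrand_eq (w : ℂ) : dbar h w / (z - w) =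
      (1 / 2) * ((z - w)⁻¹ • (fderiv ℝ h w 1 + I • fderiv ℝ h w I)) := by
    simp only [dbar, smul_eq_mul]
    ring
  have pi_ne_zero : (π : ℂ) ≠ 0 := ofReal_ne_zero.mpr Real.pi_ne_zero
  simp only [cauchyT, integrand_eq]
  rw [integral_const_mul, integral_inv_sub_smul_fderiv_add_I_smul_fderiv hh hhs, real_smul]
  push_cast
  field_simp

/-- 'If' direction of Lemma 2.2(ii): the Cauchy transform inverts `∂̄` on smooth compactly
supported functions, i.e. `T(∂̄h) = h`. -/
theorem cauchyT_dbar_eq_self (h : ℂ → ℂ) (hh : ContDiff ℝ (⊤ : ℕ∞) h)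
    (hhs : HasCompactSupport h) :
    ∀ z : ℂ, cauchyT (dbar h) z = h z :=
  cauchyT_dbar_eq_self_general (hh.of_le (by norm_cast)) hhs
end

section
/- (Lemma 2.3, concrete form: the form ⌈f⌉ is independent of choices up to ∂̄-exact terms.) Let W ⊆ ℂ be a bounded open set, K ⊆ W a compact set, and f : ℂ → ℂ a function that is holomorphic on ℂ \ K. Let ρ, ρ′ : ℂ → ℝ be smooth functions with compact supports contained in W, each identically 1 on some neighborhood of K. Let F (resp. F′) be the function on ℂ equal to f(z)·(∂̄ρ)(z) (resp. f(z)·(∂̄ρ′)(z)) for z ∈ ℂ \ K and equal to 0 on K; these are smooth with compact support contained in W. Then there exists a smooth h : ℂ → ℂ with tsupport h compact and contained in W such that ∂̄h = F − F′. -/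
open MeasureTheory

/-!
Since `ρ` is constant near `K`, `∂̄ρ` vanishes there, so `F = f * ∂̄ρ` on all of `ℂ`, and `f` is
holomorphic at every point of `tsupport (∂̄ρ)`.  Likewise `ρ - ρ′` vanishes near `K`, so
`h = f * (ρ - ρ′)` is smooth, and the Leibniz rule together with `∂̄f = 0` on `tsupport (ρ - ρ′)`
gives `∂̄h = f * (∂̄ρ - ∂̄ρ′)`.
-/

open scoped Topology

section Support

theorem disjoint_tsupport_iff_eventuallyEq_nhdsSet {X α : Type*} [TopologicalSpace X] [Zero α]
    {g : X → α} {s : Set X} : Disjoint s (tsupport g) ↔ g =ᶠ[𝓝ˢ s] 0 := by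
  simp only [Set.disjoint_left, notMem_tsupport_iff_eventuallyEq, Filter.EventuallyEq,
    eventually_nhdsSet_iff_forall]

theorem contDiff_mul_of_contDiffAt_tsupport {𝕜 E A : Type*} [NontriviallyNormedField 𝕜]
    [NormedAddCommGroup E] [NormedSpace 𝕜 E] [NormedRing A] [NormedAlgebra 𝕜 A]
    {n : WithTop ℕ∞} {f g : E → A} (hf : ∀ x ∈ tsupport g, ContDiffAt 𝕜 n f x)
    (hg : ContDiff 𝕜 n g) : ContDiff 𝕜 n (f * g) := by
  rw [contDiff_iff_contDiffAt]
  intro x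
  by_cases hx : x ∈ tsupport g
  · exact (hf x hx).mul hg.contDiffAt
  · have hfg : f * g =ᶠ[𝓝 x] fun _ => 0 :=
      notMem_tsupport_iff_eventuallyEq.1 fun h => hx (tsupport_mul_subset_right h)
    exact contDiffAt_const.congr_of_eventuallyEq hfg

end Support

section Dbar

variable {f g : ℂ → ℂ} {z : ℂ} {K : Set ℂ}

theorem dbar_const (c : ℂ) : dbar (fun _ => c) = 0 := by
  ext z
  simp [dbar]

theorem dbar_eventuallyEq (h : f =ᶠ[𝓝 z] g) : dbar f =ᶠ[𝓝 z] dbar g := by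
  filter_upwards [h.fderiv (𝕜 := ℝ)] with w hw
  simp only [dbar, hw]

theorem dbar_sub (hf : DifferentiableAt ℝ f z) (hg : DifferentiableAt ℝ g z) :
    dbar (f - g) z = dbar f z - dbar g z := by
  simp only [dbar, fderiv_sub hf hg, sub_apply]
  ring

theorem dbar_mul (hf : DifferentiableAt ℝ f z) (hg : DifferentiableAt ℝ g z) :
    dbar (f * g) z = f z * dbar g z + g z * dbar f z := by
  simp only [dbar, fderiv_mul hf hg, add_apply, smul_apply, smul_eq_mul]
  ring

theorem dbar_eq_zero_of_differentiableAt (hf : DifferentiableAt ℂ f z) : dbar f z = 0 := by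
  have cauchy_riemann := (differentiableAt_complex_iff_differentiableAt_real.1 hf).2
  rw [dbar, cauchy_riemann, smul_eq_mul, ← mul_assoc, Complex.I_mul_I]
  ring

theorem contDiff_dbar {m n : WithTop ℕ∞} (hf : ContDiff ℝ n f) (hmn : m + 1 ≤ n) :
    ContDiff ℝ m (dbar f) := by
  have : ContDiff ℝ m (fderiv ℝ f) := hf.fderiv_right hmn
  unfold dbar
  fun_prop

theorem tsupport_dbar_subset : tsupport (dbar f) ⊆ tsupport f := by
  intro z hz
  contrapose! hz
  rw [notMem_tsupport_iff_eventuallyEq] at hz ⊢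
  exact (dbar_eventuallyEq hz).trans (.of_eq (dbar_const 0))

theorem disjoint_tsupport_dbar_of_eventuallyEq_const {c : ℂ} (hf : f =ᶠ[𝓝ˢ K] fun _ => c) :
    Disjoint K (tsupport (dbar f)) := by
  refine Set.disjoint_left.2 fun z hz => notMem_tsupport_iff_eventuallyEq.2 ?_
  have hfz : f =ᶠ[𝓝 z] fun _ => c := eventually_nhdsSet_iff_forall.1 hf z hz
  exact (dbar_eventuallyEq hfz).trans (.of_eq (dbar_const c))

theorem dbar_mul_of_differentiableAt_tsupport (hf : ∀ z ∈ tsupport g, DifferentiableAt ℂ f z)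
    (hg : Differentiable ℝ g) : dbar (f * g) = f * dbar g := by
  ext z
  by_cases hz : z ∈ tsupport g
  · simp [dbar_mul ((hf z hz).restrictScalars ℝ) (hg z),
      dbar_eq_zero_of_differentiableAt (hf z hz)]
  · have hfg : z ∉ tsupport (f * g) := fun h => hz (tsupport_mul_subset_right h)
    have dbar_fg : dbar (f * g) z = 0 :=
      image_eq_zero_of_notMem_tsupport fun h => hfg (tsupport_dbar_subset h)
    have dbar_g : dbar g z = 0 :=
      image_eq_zero_of_notMem_tsupport fun h => hz (tsupport_dbar_subset h)
    rw [dbar_fg, Pi.mul_apply, dbar_g, mul_zero]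

end Dbar

section BumpForm

variable {W K : Set ℂ} {f ρ ρ' F F' : ℂ → ℂ} {m n : WithTop ℕ∞}

theorem eq_mul_dbar_of_eventuallyEq_const {c : ℂ} (hρc : ρ =ᶠ[𝓝ˢ K] fun _ => c)
    (hF : ∀ z ∉ K, F z = f z * dbar ρ z) (hF0 : ∀ z ∈ K, F z = 0) : F = f * dbar ρ := by
  ext z
  by_cases hz : z ∈ K
  · have dbar_ρ : dbar ρ z = 0 := image_eq_zero_of_notMem_tsupport
      (Set.disjoint_left.1 (disjoint_tsupport_dbar_of_eventuallyEq_const hρc) hz)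
    rw [hF0 z hz, Pi.mul_apply, dbar_ρ, mul_zero]
  · exact hF z hz

theorem contDiff_mul_of_analyticOnNhd_diff {g : ℂ → ℂ} (hf : AnalyticOnNhd ℂ f (W \ K))
    (hg : ContDiff ℝ n g) (hgW : tsupport g ⊆ W) (hgK : Disjoint K (tsupport g)) :
    ContDiff ℝ n (f * g) :=
  contDiff_mul_of_contDiffAt_tsupport (fun z hz =>
    (hf z ⟨hgW hz, Set.disjoint_right.1 hgK hz⟩).contDiffAt.restrict_scalars ℝ) hg

theorem mul_dbar_contDiff_and_hasCompactSupport (hf : AnalyticOnNhd ℂ f (W \ K))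
    (hρ : ContDiff ℝ n ρ) (hmn : m + 1 ≤ n) (hρs : HasCompactSupport ρ) (hρW : tsupport ρ ⊆ W)
    {c : ℂ} (hρc : ρ =ᶠ[𝓝ˢ K] fun _ => c) :
    ContDiff ℝ m (f * dbar ρ) ∧ HasCompactSupport (f * dbar ρ) ∧ tsupport (f * dbar ρ) ⊆ W := by
  have hsupp : tsupport (f * dbar ρ) ⊆ tsupport ρ :=
    tsupport_mul_subset_right.trans tsupport_dbar_subset
  exact ⟨contDiff_mul_of_analyticOnNhd_diff hf (contDiff_dbar hρ hmn)
      (tsupport_dbar_subset.trans hρW) (disjoint_tsupport_dbar_of_eventuallyEq_const hρc),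
    hρs.of_isClosed_subset (isClosed_tsupport _) hsupp, hsupp.trans hρW⟩

theorem exists_dbar_eq_mul_dbar_sub (hf : AnalyticOnNhd ℂ f (W \ K))
    (hn : n ≠ 0) (hρ : ContDiff ℝ n ρ) (hρ' : ContDiff ℝ n ρ')
    (hρs : HasCompactSupport ρ) (hρW : tsupport ρ ⊆ W)
    (hρ's : HasCompactSupport ρ') (hρ'W : tsupport ρ' ⊆ W) (hρρ' : ρ =ᶠ[𝓝ˢ K] ρ') :
    ∃ h : ℂ → ℂ, ContDiff ℝ n h ∧ HasCompactSupport h ∧ tsupport h ⊆ W ∧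
      ∀ z, dbar h z = f z * dbar ρ z - f z * dbar ρ' z := by
  have hW : tsupport (ρ - ρ') ⊆ W :=
    (tsupport_sub ρ ρ').trans (Set.union_subset hρW hρ'W)
  have hK : Disjoint K (tsupport (ρ - ρ')) :=
    disjoint_tsupport_iff_eventuallyEq_nhdsSet.2 hρρ'.sub_eq
  have dbar_h : dbar (f * (ρ - ρ')) = f * dbar (ρ - ρ') :=
    dbar_mul_of_differentiableAt_tsupport
      (fun z hz => (hf z ⟨hW hz, Set.disjoint_right.1 hK hz⟩).differentiableAt)
      ((hρ.sub hρ').differentiable hn)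
  refine ⟨f * (ρ - ρ'), contDiff_mul_of_analyticOnNhd_diff hf (hρ.sub hρ') hW hK,
    (hρs.sub hρ's).mul_left, tsupport_mul_subset_right.trans hW, fun z => ?_⟩
  rw [dbar_h, Pi.mul_apply, dbar_sub (hρ.differentiable hn z) (hρ'.differentiable hn z), mul_sub]

theorem bump_form_independence_general (hf : AnalyticOnNhd ℂ f (W \ K)) (hmn : m + 1 ≤ n)
    (hρ : ContDiff ℝ n ρ) (hρ' : ContDiff ℝ n ρ')
    (hρs : HasCompactSupport ρ) (hρW : tsupport ρ ⊆ W)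
    (hρ's : HasCompactSupport ρ') (hρ'W : tsupport ρ' ⊆ W)
    (hρ1 : ρ =ᶠ[𝓝ˢ K] 1) (hρ'1 : ρ' =ᶠ[𝓝ˢ K] 1)
    (hF : ∀ z ∉ K, F z = f z * dbar ρ z) (hF0 : ∀ z ∈ K, F z = 0)
    (hF' : ∀ z ∉ K, F' z = f z * dbar ρ' z) (hF'0 : ∀ z ∈ K, F' z = 0) :
    (ContDiff ℝ m F ∧ HasCompactSupport F ∧ tsupport F ⊆ W) ∧
    (ContDiff ℝ m F' ∧ HasCompactSupport F' ∧ tsupport F' ⊆ W) ∧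
    ∃ h : ℂ → ℂ, ContDiff ℝ n h ∧ HasCompactSupport h ∧ tsupport h ⊆ W ∧
      ∀ z, dbar h z = F z - F' z := by
  have hn : n ≠ 0 := (zero_lt_one.trans_le (le_add_self.trans hmn)).ne'
  obtain rfl : F = f * dbar ρ := eq_mul_dbar_of_eventuallyEq_const hρ1 hF hF0
  obtain rfl : F' = f * dbar ρ' := eq_mul_dbar_of_eventuallyEq_const hρ'1 hF' hF'0
  exact ⟨mul_dbar_contDiff_and_hasCompactSupport hf hρ hmn hρs hρW hρ1,
    mul_dbar_contDiff_and_hasCompactSupport hf hρ' hmn hρ's hρ'W hρ'1,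
    exists_dbar_eq_mul_dbar_sub hf hn hρ hρ' hρs hρW hρ's hρ'W (hρ1.trans hρ'1.symm)⟩

end BumpForm

section RealCutoff

variable {X : Type*} [TopologicalSpace X] {ρ : X → ℝ}

theorem tsupport_ofReal_comp (ρ : X → ℝ) : tsupport (fun x => (ρ x : ℂ)) = tsupport ρ :=
  tsupport_comp_eq Complex.ofReal_eq_zero ρ

theorem ofReal_comp_eventuallyEq_one_nhdsSet {K : Set X}
    (hρ1 : ∃ V : Set X, IsOpen V ∧ K ⊆ V ∧ ∀ x ∈ V, ρ x = 1) :
    (fun x => (ρ x : ℂ)) =ᶠ[𝓝ˢ K] 1 :=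
  (eventually_nhdsSet_iff_exists.2 hρ1).mono fun x hx => by simp [hx]

end RealCutoff

/-- Lemma 2.3 (concrete form): the compactly supported form `⌈f⌉ = f·∂̄ρ` is independent of
the choice of bump function `ρ`, up to a `∂̄`-exact term supported in `W`.  The functions
`F = f·∂̄ρ` and `F′ = f·∂̄ρ′` (extended by `0` on `K`) are smooth with compact support in `W`,
and their difference is `∂̄h` for a smooth `h` with compact support contained in `W`. -/
theorem bump_form_independence (W K : Set ℂ) (hW : IsOpen W) (hWb : Bornology.IsBounded W)
    (hK : IsCompact K) (hKW : K ⊆ W)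
    (f : ℂ → ℂ) (hf : DifferentiableOn ℂ f Kᶜ)
    (ρ ρ' : ℂ → ℝ)
    (hρ : ContDiff ℝ (⊤ : ℕ∞) ρ) (hρ' : ContDiff ℝ (⊤ : ℕ∞) ρ')
    (hρs : HasCompactSupport ρ) (hρW : tsupport ρ ⊆ W)
    (hρ's : HasCompactSupport ρ') (hρ'W : tsupport ρ' ⊆ W)
    (hρ1 : ∃ V : Set ℂ, IsOpen V ∧ K ⊆ V ∧ ∀ z ∈ V, ρ z = 1)
    (hρ'1 : ∃ V : Set ℂ, IsOpen V ∧ K ⊆ V ∧ ∀ z ∈ V, ρ' z = 1)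
    (F F' : ℂ → ℂ)
    (hF : ∀ z ∉ K, F z = f z * dbar (fun w => (ρ w : ℂ)) z)
    (hF0 : ∀ z ∈ K, F z = 0)
    (hF' : ∀ z ∉ K, F' z = f z * dbar (fun w => (ρ' w : ℂ)) z)
    (hF'0 : ∀ z ∈ K, F' z = 0) :
    (ContDiff ℝ (⊤ : ℕ∞) F ∧ IsCompact (tsupport F) ∧ tsupport F ⊆ W) ∧
    (ContDiff ℝ (⊤ : ℕ∞) F' ∧ IsCompact (tsupport F') ∧ tsupport F' ⊆ W) ∧
    ∃ h : ℂ → ℂ, ContDiff ℝ (⊤ : ℕ∞) h ∧ IsCompact (tsupport h) ∧ tsupport h ⊆ W ∧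
      ∀ z : ℂ, dbar h z = F z - F' z := by
  have hfan : AnalyticOnNhd ℂ f (W \ K) :=
    (hf.analyticOnNhd hK.isClosed.isOpen_compl).mono fun _ hz => hz.2
  exact bump_form_independence_general hfan (by simp)
    (Complex.ofRealCLM.contDiff.comp hρ) (Complex.ofRealCLM.contDiff.comp hρ')
    (hρs.comp_left Complex.ofReal_zero) ((tsupport_ofReal_comp ρ).trans_subset hρW)
    (hρ's.comp_left Complex.ofReal_zero) ((tsupport_ofReal_comp ρ').trans_subset hρ'W)
    (ofReal_comp_eventuallyEq_one_nhdsSet hρ1) (ofReal_comp_eventuallyEq_one_nhdsSet hρ'1)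
    hF hF0 hF' hF'0
end

section
/- (Lemma 3.2, the residue integral.) Let p ∈ ℂ, n ∈ ℤ, and let ρ : ℂ → ℝ be smooth with compact support and identically 1 on a neighborhood of p. Then −(1/π) ∫_ℂ (z − p)^n · (∂̄ρ)(z) dA(z) = 1 if n = −1 and = 0 otherwise. (For n < 0 the integrand is extended by 0 at z = p; this is harmless since ∂̄ρ vanishes on a neighborhood of p.) -/
open MeasureTheory

/-!
Since `(z - p) ^ n` is holomorphic away from `p`, the integrand is `∂̄((z - p) ^ n ρ)` there, and it
vanishes both near `p` and far from `p`. Green's formula on an annulus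
`{z | ε ≤ ‖z - p‖ ≤ R}` then leaves only the inner boundary circle, where `ρ = 1`, so the integral
is `-(1 / 2i) ∮ (z - p) ^ n dz`. Green's formula itself is the divergence theorem in polar
coordinates: the vector field `(r e^{iθ} F, i e^{iθ} F)` on the `(r, θ)`-plane has divergence
`2r ∂̄F`.
-/

open Complex Metric Set
open scoped Topology Real ComplexConjugate

theorem mul_eventuallyEq_zero_of_notMem_tsupport {X R : Type*} [TopologicalSpace X]
    [MulZeroClass R] (f : X → R) {g : X → R} {x : X} (hx : x ∉ tsupport g) :
    f * g =ᶠ[𝓝 x] 0 := by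
  filter_upwards [notMem_tsupport_iff_eventuallyEq.1 hx] with y hy
  simp [hy]

theorem differentiableAt_mul_of_mem_tsupport {𝕜 E 𝔸 : Type*} [NontriviallyNormedField 𝕜]
    [NormedAddCommGroup E] [NormedSpace 𝕜 E] [NormedRing 𝔸] [NormedAlgebra 𝕜 𝔸] {f g : E → 𝔸}
    {x : E} (hf : x ∈ tsupport g → DifferentiableAt 𝕜 f x) (hg : DifferentiableAt 𝕜 g x) :
    DifferentiableAt 𝕜 (f * g) x := by
  by_cases hx : x ∈ tsupport g
  · exact (hf hx).mul hg
  · exact (mul_eventuallyEq_zero_of_notMem_tsupport f hx).differentiableAt_iff.2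
      (differentiableAt_const 0)

theorem fderiv_add_I_mul_fderiv_I_mul (f : ℂ → ℂ) (z v : ℂ) :
    fderiv ℝ f z v + I * fderiv ℝ f z (I * v) = 2 * conj v * dbar f z := by
  have hv : v = v.re • (1 : ℂ) + v.im • I := by simp
  have hIv : I * v = v.re • I - v.im • (1 : ℂ) := by apply Complex.ext <;> simp
  have hconj : conj v = v.re - v.im * I := by apply Complex.ext <;> simp
  rw [hIv, hconj]
  nth_rw 1 [hv]
  simp only [map_add, map_sub, map_smul]
  simp only [dbar, real_smul]
  linear_combination (v.im * fderiv ℝ f z I) * I_sq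

section Dbar

variable {f g : ℂ → ℂ} {z : ℂ}

theorem dbar_eq_zero_of_eventuallyEq_const {c : ℂ} (h : f =ᶠ[𝓝 z] fun _ ↦ c) : dbar f z = 0 := by
  simp [dbar, h.fderiv_eq]

theorem dbar_eq_zero_of_notMem_tsupport (hz : z ∉ tsupport f) : dbar f z = 0 :=
  dbar_eq_zero_of_eventuallyEq_const (notMem_tsupport_iff_eventuallyEq.1 hz)

theorem continuous_dbar (hf : ContDiff ℝ 1 f) : Continuous (dbar f) := by
  have fderiv_apply (v : ℂ) : Continuous fun z ↦ fderiv ℝ f z v :=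
    (hf.continuous_fderiv one_ne_zero).clm_apply continuous_const
  exact continuous_const.mul ((fderiv_apply 1).add (continuous_const.mul (fderiv_apply I)))

theorem dbar_mul_of_differentiableAt_left
    (hf : z ∈ tsupport g → DifferentiableAt ℂ f z) (hg : DifferentiableAt ℝ g z) :
    dbar (f * g) z = f z * dbar g z := by
  by_cases hz : z ∈ tsupport g
  · have hfg := ((hf hz).hasDerivAt.hasFDerivAt.restrictScalars ℝ).mul hg.hasFDerivAt
    rw [dbar, dbar, hfg.fderiv]
    simp only [add_apply, smul_apply, smul_eq_mul, ContinuousLinearMap.coe_restrictScalars',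
      ContinuousLinearMap.toSpanSingleton_apply]
    linear_combination (g z * deriv f z / 2) * I_sq
  · rw [dbar_eq_zero_of_notMem_tsupport hz, mul_zero]
    exact dbar_eq_zero_of_eventuallyEq_const (mul_eventuallyEq_zero_of_notMem_tsupport f hz)

theorem continuousOn_dbar_mul {s : Set ℂ} (hf : ∀ z ∈ s, z ∈ tsupport g → DifferentiableAt ℂ f z)
    (hg : ContDiff ℝ 1 g) : ContinuousOn (dbar (f * g)) s := by
  have hg' : Differentiable ℝ g := hg.differentiable one_ne_zero
  refine ContinuousOn.congr (f := fun z ↦ f z * dbar g z) (fun z hz ↦ ?_)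
    fun z hz ↦ dbar_mul_of_differentiableAt_left (hf z hz) (hg' z)
  refine ContinuousAt.continuousWithinAt ?_
  by_cases hzg : z ∈ tsupport g
  · exact (hf z hz hzg).continuousAt.mul (continuous_dbar hg).continuousAt
  · have hzero : (fun w ↦ f w * dbar g w) =ᶠ[𝓝 z] fun _ ↦ 0 := by
      filter_upwards [(isClosed_tsupport g).isOpen_compl.mem_nhds hzg] with w hw
      rw [dbar_eq_zero_of_notMem_tsupport hw, mul_zero]
    exact continuousAt_const.congr hzero.symm

end Dbar

theorem circleMap_mem_closedBall_sdiff_ball_iff {c : ℂ} {r R s θ : ℝ} (hs : 0 < s) :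
    circleMap c s θ ∈ closedBall c R \ ball c r ↔ s ∈ Icc r R := by
  simp [circleMap, dist_eq_norm, abs_of_pos hs, and_comm]

theorem setIntegral_closedBall_sdiff_ball {E : Type*} [NormedAddCommGroup E] [NormedSpace ℝ E]
    (f : ℂ → E) (c : ℂ) {r : ℝ} (hr : 0 < r) (R : ℝ) :
    ∫ z in closedBall c R \ ball c r, f z =
      ∫ q in Icc (r, -π) (R, π), q.1 • f (circleMap c q.1 q.2) := by
  set A := closedBall c R \ ball c r
  have hA : MeasurableSet A := measurableSet_closedBall.diff measurableSet_ball
  have polar_symm (q : ℝ × ℝ) : c + Complex.polarCoord.symm q = circleMap c q.1 q.2 := by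
    simp [circleMap, Complex.polarCoord_symm_apply, exp_mul_I]
  calc ∫ z in A, f z = ∫ z, A.indicator f (c + z) := by
        rw [integral_add_left_eq_self, integral_indicator hA]
    _ = ∫ q in polarCoord.target, q.1 • A.indicator f (circleMap c q.1 q.2) := by
        rw [← Complex.integral_comp_polarCoord_symm]
        simp only [polar_symm]
    _ = ∫ q in Icc r R ×ˢ Ioo (-π) π, q.1 • A.indicator f (circleMap c q.1 q.2) := by
        refine setIntegral_eq_of_subset_of_forall_sdiff_eq_zero
          polarCoord.open_target.measurableSet
          (prod_mono (fun s hs ↦ hr.trans_le hs.1) subset_rfl) ?_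
        rintro q ⟨⟨hq, hθ⟩, hqA⟩
        rw [indicator_of_notMem, smul_zero]
        exact fun h ↦ hqA ⟨(circleMap_mem_closedBall_sdiff_ball_iff hq).1 h, hθ⟩
    _ = ∫ q in Icc r R ×ˢ Ioo (-π) π, q.1 • f (circleMap c q.1 q.2) := by
        refine setIntegral_congr_fun (measurableSet_Icc.prod measurableSet_Ioo) fun q hq ↦ ?_
        rw [indicator_of_mem
          ((circleMap_mem_closedBall_sdiff_ball_iff (hr.trans_le hq.1.1)).2 hq.1)]
    _ = ∫ q in Icc (r, -π) (R, π), q.1 • f (circleMap c q.1 q.2) := by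
        rw [← Icc_prod_Icc]
        exact setIntegral_congr_set (Measure.set_prod_ae_eq ae_eq_rfl Ioo_ae_eq_Icc)

theorem hasFDerivAt_circleMap_uncurry (c : ℂ) (q : ℝ × ℝ) :
    HasFDerivAt (fun q : ℝ × ℝ ↦ circleMap c q.1 q.2)
      ((ContinuousLinearMap.fst ℝ ℝ ℝ).smulRight (circleMap 0 1 q.2) +
        (ContinuousLinearMap.snd ℝ ℝ ℝ).smulRight (I * circleMap 0 q.1 q.2)) q := by
  have hfst : HasFDerivAt (fun q : ℝ × ℝ ↦ (q.1 : ℂ)) _ q :=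
    ofRealCLM.hasFDerivAt.comp q hasFDerivAt_fst
  have hsnd : HasFDerivAt (fun q : ℝ × ℝ ↦ (q.2 : ℂ)) _ q :=
    ofRealCLM.hasFDerivAt.comp q hasFDerivAt_snd
  refine ((hfst.mul (hsnd.mul_const I).cexp).const_add c).congr_fderiv ?_
  ext <;> simp [circleMap, mul_comm, mul_left_comm]

theorem intervalIntegral_circleMap_mul (f : ℂ → ℂ) (c : ℂ) (R : ℝ) :
    ∫ θ in -π..π, circleMap 0 R θ * f (circleMap c R θ) = -I * ∮ z in C(c, R), f z := by
  have hper : Function.Periodic (fun θ ↦ circleMap 0 R θ * f (circleMap c R θ)) (2 * π) :=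
    fun θ ↦ by simp only [periodic_circleMap _ R θ]
  have hshift := hper.intervalIntegral_add_eq (-π) 0
  rw [show -π + 2 * π = π by ring, zero_add] at hshift
  rw [hshift, circleIntegral, ← intervalIntegral.integral_const_mul]
  congr with θ
  simp only [deriv_circleMap, smul_eq_mul]
  linear_combination (circleMap 0 R θ * f (circleMap c R θ)) * I_sq

/-- The first component, at `q = (r, θ)`, of the vector field `(r e^{iθ} F, i e^{iθ} F)` whose
divergence is `2r ∂̄F`, where `F` is evaluated at `c + r e^{iθ}`. Its flux through the side `r = R`
of a polar rectangle is a circle integral of `F`. -/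
noncomputable def radialFlux (F : ℂ → ℂ) (c : ℂ) (q : ℝ × ℝ) : ℂ :=
  circleMap 0 q.1 q.2 * F (circleMap c q.1 q.2)

/-- The second component, at `q = (r, θ)`, of the vector field `(r e^{iθ} F, i e^{iθ} F)` whose
divergence is `2r ∂̄F`, where `F` is evaluated at `c + r e^{iθ}`. Its fluxes through the sides
`θ = ±π` of a polar rectangle cancel. -/
noncomputable def angularFlux (F : ℂ → ℂ) (c : ℂ) (q : ℝ × ℝ) : ℂ :=
  I * circleMap 0 1 q.2 * F (circleMap c q.1 q.2)

theorem angularFlux_pi (F : ℂ → ℂ) (c : ℂ) (r : ℝ) :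
    angularFlux F c (r, π) = angularFlux F c (r, -π) := by
  have hcircle (c : ℂ) (r : ℝ) : circleMap c r π = circleMap c r (-π) := by
    rw [← periodic_circleMap c r (-π)]
    ring_nf
  simp only [angularFlux, hcircle]

section Green

variable {F : ℂ → ℂ} {c : ℂ} {q : ℝ × ℝ}

theorem differentiableAt_radialFlux (hF : DifferentiableAt ℝ F (circleMap c q.1 q.2)) :
    DifferentiableAt ℝ (radialFlux F c) q :=
  (hasFDerivAt_circleMap_uncurry 0 q).differentiableAt.mul
    (hF.comp q (hasFDerivAt_circleMap_uncurry c q).differentiableAt)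

theorem differentiableAt_angularFlux (hF : DifferentiableAt ℝ F (circleMap c q.1 q.2)) :
    DifferentiableAt ℝ (angularFlux F c) q :=
  (((differentiable_circleMap 0 1 q.2).comp q differentiableAt_snd).const_mul I).mul
    (hF.comp q (hasFDerivAt_circleMap_uncurry c q).differentiableAt)

theorem fderiv_radialFlux_apply (hF : DifferentiableAt ℝ F (circleMap c q.1 q.2)) :
    fderiv ℝ (radialFlux F c) q (1, 0) =
      circleMap 0 q.1 q.2 * fderiv ℝ F (circleMap c q.1 q.2) (circleMap 0 1 q.2) +
        circleMap 0 1 q.2 * F (circleMap c q.1 q.2) := by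
  have hderiv : HasFDerivAt (radialFlux F c) _ q := (hasFDerivAt_circleMap_uncurry 0 q).mul
    (hF.hasFDerivAt.comp q (hasFDerivAt_circleMap_uncurry c q))
  simp [hderiv.fderiv, mul_comm]

theorem fderiv_angularFlux_apply (hF : DifferentiableAt ℝ F (circleMap c q.1 q.2)) :
    fderiv ℝ (angularFlux F c) q (0, 1) =
      I * circleMap 0 1 q.2 * fderiv ℝ F (circleMap c q.1 q.2) (I * circleMap 0 q.1 q.2) -
        circleMap 0 1 q.2 * F (circleMap c q.1 q.2) := by
  have hcircle : HasFDerivAt (fun q : ℝ × ℝ ↦ circleMap 0 1 q.2) _ q :=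
    (hasDerivAt_circleMap 0 1 q.2).hasFDerivAt.comp q hasFDerivAt_snd
  have hderiv : HasFDerivAt (angularFlux F c) _ q := (hcircle.const_mul I).mul
    (hF.hasFDerivAt.comp q (hasFDerivAt_circleMap_uncurry c q))
  simp only [hderiv.fderiv, add_apply, smul_apply, ContinuousLinearMap.comp_apply,
    ContinuousLinearMap.smulRight_apply, ContinuousLinearMap.coe_fst',
    ContinuousLinearMap.coe_snd', ContinuousLinearMap.toSpanSingleton_apply, zero_smul, one_smul,
    zero_add, smul_eq_mul]
  linear_combination (circleMap 0 1 q.2 * F (circleMap c q.1 q.2)) * I_sq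

theorem fderiv_radialFlux_add_fderiv_angularFlux
    (hF : DifferentiableAt ℝ F (circleMap c q.1 q.2)) :
    fderiv ℝ (radialFlux F c) q (1, 0) + fderiv ℝ (angularFlux F c) q (0, 1) =
      2 * (q.1 • dbar F (circleMap c q.1 q.2)) := by
  have hscale : circleMap 0 q.1 q.2 = q.1 • circleMap 0 1 q.2 := by simp [circleMap]
  have hunit : circleMap 0 1 q.2 * conj (circleMap 0 1 q.2) = 1 := by
    simp [mul_conj, normSq_eq_norm_sq]
  have hdbar := fderiv_add_I_mul_fderiv_I_mul F (circleMap c q.1 q.2) (circleMap 0 1 q.2)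
  rw [fderiv_radialFlux_apply hF, fderiv_angularFlux_apply hF, hscale, mul_smul_comm, map_smul]
  simp only [real_smul]
  linear_combination (q.1 * circleMap 0 1 q.2) * hdbar +
    (2 * q.1 * dbar F (circleMap c q.1 q.2)) * hunit

theorem integral_dbar_closedBall_sdiff_ball {r R : ℝ} (hr : 0 < r) (hrR : r ≤ R)
    (hF : ∀ z ∈ closedBall c R \ ball c r, DifferentiableAt ℝ F z)
    (hF' : ContinuousOn (dbar F) (closedBall c R \ ball c r)) :
    2 * I * ∫ z in closedBall c R \ ball c r, dbar F z =
      (∮ z in C(c, R), F z) - ∮ z in C(c, r), F z := by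
  set Q := Icc (r, -π) (R, π)
  have hmaps : MapsTo (fun q : ℝ × ℝ ↦ circleMap c q.1 q.2) Q (closedBall c R \ ball c r) :=
    fun q hq ↦ (circleMap_mem_closedBall_sdiff_ball_iff (hr.trans_le hq.1.1)).2 ⟨hq.1.1, hq.2.1⟩
  have hradial (q) (hq : q ∈ Q) : DifferentiableAt ℝ (radialFlux F c) q :=
    differentiableAt_radialFlux (hF _ (hmaps hq))
  have hangular (q) (hq : q ∈ Q) : DifferentiableAt ℝ (angularFlux F c) q :=
    differentiableAt_angularFlux (hF _ (hmaps hq))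
  have hdiv : EqOn (fun q ↦ fderiv ℝ (radialFlux F c) q (1, 0) +
      fderiv ℝ (angularFlux F c) q (0, 1)) _ Q :=
    fun q hq ↦ fderiv_radialFlux_add_fderiv_angularFlux (hF _ (hmaps hq))
  have hcont : ContinuousOn (fun q : ℝ × ℝ ↦ 2 * (q.1 • dbar F (circleMap c q.1 q.2))) Q :=
    continuousOn_const.mul (continuousOn_fst.smul (hF'.comp
      (fun q _ ↦ (hasFDerivAt_circleMap_uncurry c q).continuousAt.continuousWithinAt) hmaps))
  have hinterior : Ioo r R ×ˢ Ioo (-π) π ⊆ Q :=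
    (prod_mono Ioo_subset_Icc_self Ioo_subset_Icc_self).trans (Icc_prod_Icc ..).subset
  have hgreen := integral_divergence_prod_Icc_of_hasFDerivAt_of_le
    (radialFlux F c) (angularFlux F c) _ _ (r, -π) (R, π) ⟨hrR, by simp [Real.pi_pos.le]⟩
    (fun q hq ↦ (hradial q hq).continuousAt.continuousWithinAt)
    (fun q hq ↦ (hangular q hq).continuousAt.continuousWithinAt)
    (fun q hq ↦ (hradial q (hinterior hq)).hasFDerivAt)
    (fun q hq ↦ (hangular q (hinterior hq)).hasFDerivAt)
    ((hcont.integrableOn_compact isCompact_Icc).congr_fun hdiv.symm measurableSet_Icc)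
  rw [setIntegral_congr_fun measurableSet_Icc hdiv, integral_const_mul,
    ← setIntegral_closedBall_sdiff_ball _ c hr] at hgreen
  simp only [angularFlux_pi, sub_self, zero_add, radialFlux, intervalIntegral_circleMap_mul]
    at hgreen
  linear_combination I * hgreen - ((∮ z in C(c, R), F z) - ∮ z in C(c, r), F z) * I_sq

end Green

theorem integral_mul_dbar_eq_circleIntegral {f ρ : ℂ → ℂ} {p : ℂ} {ε : ℝ} (hε : 0 < ε)
    (hf : ∀ z ∈ tsupport ρ, z ≠ p → DifferentiableAt ℂ f z) (hρ : ContDiff ℝ 1 ρ)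
    (hρs : HasCompactSupport ρ) (hρ1 : EqOn ρ 1 (closedBall p ε)) :
    ∫ z, f z * dbar ρ z = I / 2 * ∮ z in C(p, ε), f z := by
  obtain ⟨R, hεR, hR⟩ := hρs.isCompact.isBounded.subset_ball_lt ε p
  set A := closedBall p R \ ball p ε
  have hfA (z) (hz : z ∈ A) (hzρ : z ∈ tsupport ρ) : DifferentiableAt ℂ f z :=
    hf z hzρ fun hzp ↦ hz.2 (hzp ▸ mem_ball_self hε)
  have hρdiff : Differentiable ℝ ρ := hρ.differentiable one_ne_zero
  have hzero (z) (hz : z ∉ A) : f z * dbar ρ z = 0 := by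
    suffices dbar ρ z = 0 by rw [this, mul_zero]
    by_cases hzε : z ∈ ball p ε
    · exact dbar_eq_zero_of_eventuallyEq_const
        (hρ1.eventuallyEq_of_mem (closedBall_mem_nhds_of_mem hzε))
    · exact dbar_eq_zero_of_notMem_tsupport fun h ↦ hz ⟨ball_subset_closedBall (hR h), hzε⟩
  have houter : ∮ z in C(p, R), (f * ρ) z = 0 := by
    rw [circleIntegral.integral_congr (g := 0) (hε.trans hεR).le]
    · simp [circleIntegral]
    · intro z hz
      have : z ∉ tsupport ρ := fun h ↦ (mem_sphere.1 hz).not_lt (hR h)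
      simp [image_eq_zero_of_notMem_tsupport this]
  have hinner : ∮ z in C(p, ε), (f * ρ) z = ∮ z in C(p, ε), f z :=
    circleIntegral.integral_congr hε.le fun z hz ↦ by simp [hρ1 (sphere_subset_closedBall hz)]
  have hgreen := integral_dbar_closedBall_sdiff_ball hε hεR.le
    (fun z hz ↦ differentiableAt_mul_of_mem_tsupport
      (fun h ↦ (hfA z hz h).restrictScalars ℝ) (hρdiff z))
    (continuousOn_dbar_mul hfA hρ)
  rw [houter, hinner, setIntegral_congr_fun (measurableSet_closedBall.diff measurableSet_ball)
    fun z hz ↦ dbar_mul_of_differentiableAt_left (hfA z hz) (hρdiff z),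
    setIntegral_eq_integral_of_forall_compl_eq_zero hzero] at hgreen
  linear_combination -I / 2 * hgreen + (∫ z, f z * dbar ρ z) * I_sq

theorem residue_integral_general (p : ℂ) (n : ℤ) {ρ : ℂ → ℂ} (hρ : ContDiff ℝ 1 ρ)
    (hρs : HasCompactSupport ρ) (hρ1 : ρ =ᶠ[𝓝 p] 1) :
    -(1 / (π : ℂ)) * ∫ z, (z - p) ^ n * dbar ρ z = if n = -1 then 1 else 0 := by
  obtain ⟨ε, hε, hρε⟩ := nhds_basis_closedBall.eventually_iff.1 hρ1
  have hzpow (z) (_ : z ∈ tsupport ρ) (hz : z ≠ p) : DifferentiableAt ℂ (fun z ↦ (z - p) ^ n) z :=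
    (differentiableAt_id.sub_const p).zpow (.inl (sub_ne_zero.2 hz))
  rw [integral_mul_dbar_eq_circleIntegral hε hzpow hρ hρs fun z hz ↦ hρε hz]
  split_ifs with hn
  · have hπ : (π : ℂ) ≠ 0 := ofReal_ne_zero.2 Real.pi_ne_zero
    simp only [hn, zpow_neg_one, circleIntegral.integral_sub_center_inv p hε.ne']
    field_simp
    simp
  · rw [circleIntegral.integral_sub_zpow_of_ne hn, mul_zero, mul_zero]

/-- Lemma 3.2 (the residue integral): for `ρ` a smooth compactly supported bump equal to
`1` near `p` and any `n : ℤ`,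
`−(1/π) ∫_ℂ (z − p)^n · ∂̄ρ(z) dA(z) = δ_{n,−1}`. -/
theorem residue_integral (p : ℂ) (n : ℤ) (ρ : ℂ → ℝ) (hρ : ContDiff ℝ (⊤ : ℕ∞) ρ)
    (hρs : HasCompactSupport ρ)
    (hρ1 : ∃ V : Set ℂ, IsOpen V ∧ p ∈ V ∧ ∀ z ∈ V, ρ z = 1) :
    -(1 / (Real.pi : ℂ)) * ∫ z : ℂ, (z - p) ^ n * dbar (fun w => (ρ w : ℂ)) z =
      if n = -1 then 1 else 0 := by
  obtain ⟨V, hV, hpV, hρV⟩ := hρ1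
  exact residue_integral_general p n
    (ofRealCLM.contDiff.comp (hρ.of_le (by exact_mod_cast le_top)))
    (hρs.comp_left ofReal_zero)
    (by filter_upwards [hV.mem_nhds hpV] with z hz using by simp [hρV z hz])
end
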